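/- (Theorem 2.5: dependent tensorization of T_p.) Let (E,d) be a Polish metric space, 1 ≤ p ≤ 2, and ℙ a probability measure on E^n. Assume that P_i(·|x^{i-1}) satisfies T_p(C) on (E,d) for all i ≥ 1 and all x^{i-1} ∈ E^{i-1}, and assume condition (C1): there exist a_j ≥ 0 with r^p := Σ_{j=1}^∞ a_j^p < 1 such that [W_p^d(P_i(·|x^{i-1}), P_i(·|x̃^{i-1}))]^p ≤ Σ_{j=1}^{i-1} a_j^p · d(x_{i-j}, x̃_{i-j})^p for all i and all x^{i-1}, x̃^{i-1} ∈ E^{i-1}. Then for every probability measure ℚ on E^n, W_p^{d_{l_p}}(ℚ,ℙ) ≤ (1/(1−r))·√(2C·n^{2/p−1}·H(ℚ|ℙ)). -/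

import Mathlib

open MeasureTheory ProbabilityTheory ENNReal

noncomputable section

/-- `π` is a coupling of `μ` and `ν`. -/
def IsCoupling {E F : Type*} [MeasurableSpace E] [MeasurableSpace F]
    (π : Measure (E × F)) (μ : Measure E) (ν : Measure F) : Prop :=
  π.map Prod.fst = μ ∧ π.map Prod.snd = ν

/-- The `L^p`-Wasserstein distance associated to the cost function `d`, valued in `ℝ≥0∞`. -/
def wassersteinDist {E : Type*} [MeasurableSpace E] (p : ℝ) (d : E → E → ℝ)
    (μ ν : Measure E) : ℝ≥0∞ :=
  ⨅ (π : Measure (E × E)) (_ : IsCoupling π μ ν),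
    (∫⁻ z, ENNReal.ofReal (d z.1 z.2) ^ p ∂π) ^ (1 / p)

/-- The `L^p`-Wasserstein distance for an extended (`ℝ≥0∞`-valued) pseudo-metric `d`. -/
def wassersteinDistE {E : Type*} [MeasurableSpace E] (p : ℝ) (d : E → E → ℝ≥0∞)
    (μ ν : Measure E) : ℝ≥0∞ :=
  ⨅ (π : Measure (E × E)) (_ : IsCoupling π μ ν),
    (∫⁻ z, d z.1 z.2 ^ p ∂π) ^ (1 / p)

open Classical in
/-- Relative entropy (Kullback information) `H(ν | μ)`, valued in `ℝ≥0∞`. -/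
def relEntropy {E : Type*} [MeasurableSpace E] (ν μ : Measure E) : ℝ≥0∞ :=
  if ν ≪ μ ∧ Integrable (fun x => Real.log ((ν.rnDeriv μ x).toReal)) ν then
    ENNReal.ofReal (∫ x, Real.log ((ν.rnDeriv μ x).toReal) ∂ν)
  else ∞

/-- The transportation cost-information inequality `T_p(C)` for `μ` on `(E, d)`:
`W_p(μ, ν) ≤ √(2 C H(ν|μ))` for every probability measure `ν`, written in the equivalent
squared form `W_p(μ,ν)² ≤ 2C·H(ν|μ)` in `ℝ≥0∞`. -/
def TpIneq {E : Type*} [MeasurableSpace E] (p : ℝ) (d : E → E → ℝ) (C : ℝ)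
    (μ : Measure E) : Prop :=
  ∀ ν : Measure E, IsProbabilityMeasure ν →
    wassersteinDist p d μ ν ^ 2 ≤ ENNReal.ofReal (2 * C) * relEntropy ν μ

/-- The transportation cost-information inequality `T_p(C)` for an extended pseudo-metric. -/
def TpIneqE {E : Type*} [MeasurableSpace E] (p : ℝ) (d : E → E → ℝ≥0∞) (C : ℝ)
    (μ : Measure E) : Prop :=
  ∀ ν : Measure E, IsProbabilityMeasure ν →
    wassersteinDistE p d μ ν ^ 2 ≤ ENNReal.ofReal (2 * C) * relEntropy ν μ

/-- The law on `E^n` of the (in general non-homogeneous, non-Markovian) random sequence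
determined by the successive regular conditional laws `K i : (Fin i → E) → Measure E`
of the `(i+1)`-th coordinate given the first `i` coordinates. -/
def chainMeasure {E : Type*} [MeasurableSpace E]
    (K : (i : ℕ) → (Fin i → E) → Measure E) : (n : ℕ) → Measure (Fin n → E)
  | 0 => Measure.dirac (fun i => i.elim0)
  | n + 1 => (chainMeasure K n).bind fun x => (K n x).map (Fin.snoc x)

open InformationTheory
open scoped NNReal

/-!
Couple the law `P` of the chain with `Q` coordinate by coordinate: given the pasts `(x, x')`, the
next coordinates are coupled optimally up to `δ`, through a kernel obtained by measurable selection.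
The triangle inequality through the intermediate law `P_i(· | x')` bounds their distance by a
contraction term, controlled by (C1), plus an entropy term, controlled by `T_p(C)`, and the chain
rule for entropy says that the entropies add up to at most `H(Q | P)`. By Minkowski's inequality the
`l_p`-norm `N` of the sequence of coordinate distances then satisfies
`N ≤ r N + (2 C n^(2/p - 1) H(Q | P))^(1/2) + n^(1/p) δ`, the power of `n` coming from Hölder's
inequality, and one lets `δ → 0`.
-/

/-! ### Couplings and transport norms -/

lemma map_prodMap_compProd {X Y A B : Type*} [MeasurableSpace X] [MeasurableSpace Y]
    [MeasurableSpace A] [MeasurableSpace B] {μ : Measure X} [SFinite μ] {κ : Kernel X A}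
    [IsSFiniteKernel κ] {η : Kernel Y B} [IsSFiniteKernel η] {f : X → Y} {g : A → B}
    (hf : Measurable f) (hg : Measurable g) (h : ∀ x, (κ x).map g = η (f x)) :
    (μ ⊗ₘ κ).map (Prod.map f g) = μ.map f ⊗ₘ η := by
  refine Measure.ext_of_lintegral _ fun φ hφ => ?_
  rw [lintegral_map hφ (hf.prodMap hg), Measure.lintegral_compProd (by fun_prop),
    Measure.lintegral_compProd hφ, lintegral_map hφ.lintegral_kernel_prod_right' hf]
  refine lintegral_congr fun x => ?_
  rw [← h, lintegral_map (by fun_prop) hg]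
  rfl

namespace IsCoupling

variable {X Y A B : Type*} [MeasurableSpace X] [MeasurableSpace Y] [MeasurableSpace A]
  [MeasurableSpace B] {μ : Measure X} {ν : Measure Y} {γ : Measure (X × Y)}

lemma isProbabilityMeasure [IsProbabilityMeasure μ] (h : IsCoupling γ μ ν) :
    IsProbabilityMeasure γ := by
  rw [← h.1] at ‹IsProbabilityMeasure μ›
  exact Measure.isProbabilityMeasure_of_map Prod.fst

lemma swap (h : IsCoupling γ μ ν) : IsCoupling (γ.map Prod.swap) ν μ := by
  constructor
  · rw [Measure.map_map measurable_fst measurable_swap]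
    exact h.2
  · rw [Measure.map_map measurable_snd measurable_swap]
    exact h.1

lemma map {f : X → A} {g : Y → B} (hf : Measurable f) (hg : Measurable g)
    (h : IsCoupling γ μ ν) : IsCoupling (γ.map (Prod.map f g)) (μ.map f) (ν.map g) := by
  constructor
  · rw [Measure.map_map measurable_fst (hf.prodMap hg), ← h.1, Measure.map_map hf measurable_fst]
    rfl
  · rw [Measure.map_map measurable_snd (hf.prodMap hg), ← h.2, Measure.map_map hg measurable_snd]
    rfl

lemma compProd [SFinite γ] (h : IsCoupling γ μ ν) {κ : Kernel X A} {η : Kernel Y B}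
    [IsSFiniteKernel κ] [IsSFiniteKernel η] {π : Kernel (X × Y) (A × B)} [IsSFiniteKernel π]
    (hπ : ∀ z, IsCoupling (π z) (κ z.1) (η z.2)) :
    IsCoupling ((γ ⊗ₘ π).map fun w => ((w.1.1, w.2.1), (w.1.2, w.2.2))) (μ ⊗ₘ κ) (ν ⊗ₘ η) := by
  constructor
  · rw [Measure.map_map measurable_fst (by fun_prop), ← h.1]
    exact map_prodMap_compProd measurable_fst measurable_fst fun z => (hπ z).1
  · rw [Measure.map_map measurable_snd (by fun_prop), ← h.2]
    exact map_prodMap_compProd measurable_snd measurable_snd fun z => (hπ z).2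

end IsCoupling

section Wasserstein

variable {E : Type*} [MeasurableSpace E] {p : ℝ} {d : E → E → ℝ} {μ ν : Measure E}

lemma wassersteinDist_le_eLpNorm' {γ : Measure (E × E)} (hγ : IsCoupling γ μ ν) :
    wassersteinDist p d μ ν ≤ eLpNorm' (fun z => ENNReal.ofReal (d z.1 z.2)) p γ :=
  iInf₂_le γ hγ

lemma exists_isCoupling_eLpNorm'_lt {c : ℝ≥0∞} (h : wassersteinDist p d μ ν < c) :
    ∃ γ, IsCoupling γ μ ν ∧ eLpNorm' (fun z => ENNReal.ofReal (d z.1 z.2)) p γ < c := by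
  simp only [wassersteinDist, iInf_lt_iff] at h
  obtain ⟨γ, hγ, hlt⟩ := h
  exact ⟨γ, hγ, hlt⟩

lemma wassersteinDist_comm (hd : ∀ x y, d x y = d y x) (μ ν : Measure E) :
    wassersteinDist p d μ ν = wassersteinDist p d ν μ := by
  have key (μ ν : Measure E) : wassersteinDist p d μ ν ≤ wassersteinDist p d ν μ := by
    refine le_iInf₂ fun γ hγ => (wassersteinDist_le_eLpNorm' hγ.swap).trans_eq ?_
    refine congrArg (· ^ (1 / p)) ((lintegral_map_equiv _ MeasurableEquiv.prodComm).trans ?_)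
    exact lintegral_congr fun z => congrArg (fun t => ENNReal.ofReal t ^ p) (hd _ _)
  exact (key μ ν).antisymm (key ν μ)

end Wasserstein

section Norm

variable {X Y : Type*} [MeasurableSpace X] [MeasurableSpace Y] {μ : Measure X} {p : ℝ}

lemma eLpNorm'_map_measure {f : Y → ℝ≥0∞} {T : X → Y} (hf : Measurable f) (hT : Measurable T) :
    eLpNorm' f p (μ.map T) = eLpNorm' (fun x => f (T x)) p μ := by
  rw [eLpNorm'_eq_lintegral_enorm, lintegral_map (by fun_prop) hT]
  rfl

lemma eLpNorm'_le_add {f g h : X → ℝ≥0∞} (hp : 1 ≤ p) (hg : Measurable g) (hh : Measurable h)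
    (hfgh : ∀ x, f x ≤ g x + h x) : eLpNorm' f p μ ≤ eLpNorm' g p μ + eLpNorm' h p μ :=
  (eLpNorm'_mono_enorm_ae (by linarith) (ae_of_all μ hfgh)).trans
    (eLpNorm'_add_le hg.aestronglyMeasurable hh.aestronglyMeasurable hp)

lemma eLpNorm'_le_add_const [IsProbabilityMeasure μ] {f g : X → ℝ≥0∞} (hp : 1 ≤ p)
    (hg : Measurable g) {c : ℝ≥0∞} (h : ∀ x, f x ≤ g x + c) :
    eLpNorm' f p μ ≤ eLpNorm' g p μ + c := by
  have := eLpNorm'_le_add (μ := μ) hp hg measurable_const h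
  rwa [eLpNorm'_const_of_isProbabilityMeasure _ (by linarith), enorm_eq_self] at this

lemma lintegral_rpow_eq_eLpNorm'_rpow (hp : 0 < p) (f : X → ℝ≥0∞) :
    ∫⁻ x, f x ^ p ∂μ = eLpNorm' f p μ ^ p :=
  lintegral_rpow_enorm_eq_rpow_eLpNorm' (f := f) hp

lemma eLpNorm'_sqrt_le [IsProbabilityMeasure μ] (hp : 0 < p) (hp2 : p ≤ 2)
    {f : X → ℝ≥0∞} (hf : Measurable f) :
    eLpNorm' (fun x => f x ^ (1 / 2 : ℝ)) p μ ≤ (∫⁻ x, f x ∂μ) ^ (1 / 2 : ℝ) := by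
  refine (eLpNorm'_le_eLpNorm'_of_exponent_le hp hp2 μ (by fun_prop)).trans_eq ?_
  simp only [eLpNorm'_eq_lintegral_enorm, enorm_eq_self, ← ENNReal.rpow_mul]
  norm_num

end Norm

section Gluing

variable {X Y A B : Type*} [MeasurableSpace X] [MeasurableSpace Y] [MeasurableSpace A]
  [MeasurableSpace B] [MeasurableSpace.CountableOrCountablyGenerated X Y]
  [StandardBorelSpace A] [StandardBorelSpace B]

lemma exists_kernel_gluing [Nonempty A] [Nonempty B] (κ : Kernel X (Y × A)) [IsFiniteKernel κ]
    (η : Kernel X (Y × B)) [IsFiniteKernel η] (h : ∀ x, (κ x).map Prod.fst = (η x).map Prod.fst) :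
    ∃ θ : Kernel X (Y × A × B), ∀ x,
      (θ x).map (Prod.map id Prod.fst) = κ x ∧ (θ x).map (Prod.map id Prod.snd) = η x := by
  have hfst : κ.fst = η.fst := Kernel.ext fun x => by
    rw [Kernel.fst_apply, Kernel.fst_apply, h]
  refine ⟨κ.fst ⊗ₖ (κ.condKernel ×ₖ η.condKernel), fun x => ⟨?_, ?_⟩⟩
  · rw [Kernel.compProd_apply_eq_compProd_sectR,
      map_prodMap_compProd (η := κ.condKernel.sectR x) measurable_id measurable_fst fun y => ?_,
      Measure.map_id, ← Kernel.compProd_apply_eq_compProd_sectR, κ.disintegrate]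
    rw [Kernel.sectR_apply, ← Kernel.fst_apply, Kernel.fst_prod, Kernel.sectR_apply]
    rfl
  · rw [Kernel.compProd_apply_eq_compProd_sectR,
      map_prodMap_compProd (η := η.condKernel.sectR x) measurable_id measurable_snd fun y => ?_,
      Measure.map_id, ← Kernel.compProd_apply_eq_compProd_sectR, hfst, η.disintegrate]
    rw [Kernel.sectR_apply, ← Kernel.snd_apply, Kernel.snd_prod, Kernel.sectR_apply]
    rfl

end Gluing

section Lift

variable {X A B S T : Type*} [MeasurableSpace X] [MeasurableSpace A] [MeasurableSpace B]
  [MeasurableSpace S] [MeasurableSpace T] [StandardBorelSpace A] [StandardBorelSpace S]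
  [StandardBorelSpace T] [MeasurableSpace.CountableOrCountablyGenerated X S]

lemma exists_kernel_lift_fst [Nonempty A] [Nonempty T] {κ : Kernel X A} [IsFiniteKernel κ]
    {π : Kernel X (S × T)} [IsFiniteKernel π] {f : A → S} (hf : Measurable f)
    (h : ∀ x, (π x).map Prod.fst = (κ x).map f) :
    ∃ π' : Kernel X (A × T), ∀ x,
      (π' x).map Prod.fst = κ x ∧ (π' x).map (Prod.map f id) = π x := by
  have hgraph : Measurable fun a => (f a, a) := hf.prodMk measurable_id
  obtain ⟨θ, hθ⟩ := exists_kernel_gluing (κ.map fun a => (f a, a)) π fun x => by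
    rw [Kernel.map_apply _ hgraph, Measure.map_map measurable_fst hgraph, h]
    rfl
  refine ⟨θ.map Prod.snd, fun x => ?_⟩
  obtain ⟨hκ, hπ⟩ := hθ x
  rw [Kernel.map_apply _ hgraph] at hκ
  rw [Kernel.map_apply _ measurable_snd]
  constructor
  · have := congrArg (Measure.map Prod.snd) hκ
    rw [Measure.map_map measurable_snd (by fun_prop), Measure.map_map measurable_snd hgraph] at this
    rw [Measure.map_map measurable_fst measurable_snd]
    exact this.trans Measure.map_id
  · have hS : MeasurableSet {w : S × A | w.1 = f w.2} :=
      measurableSet_eq_fun measurable_fst (hf.comp measurable_snd)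
    have hae : ∀ᵐ w ∂(θ x), w.1 = f w.2.1 := by
      have : ∀ᵐ w ∂((κ x).map fun a => (f a, a)), w.1 = f w.2 :=
        (ae_map_iff hgraph.aemeasurable hS).2 (ae_of_all _ fun _ => rfl)
      rw [← hκ] at this
      exact ae_of_ae_map (by fun_prop) this
    rw [Measure.map_map (by fun_prop) measurable_snd, ← hπ]
    exact Measure.map_congr (hae.mono fun w hw => Prod.ext hw.symm rfl)

lemma exists_kernel_lift_isCoupling [StandardBorelSpace B]
    [MeasurableSpace.CountableOrCountablyGenerated X T] [Nonempty A] [Nonempty B]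
    {κ : Kernel X A} [IsMarkovKernel κ] {η : Kernel X B} [IsFiniteKernel η]
    {π : Kernel X (S × T)} [IsFiniteKernel π]
    {f : A → S} {g : B → T} (hf : Measurable f) (hg : Measurable g)
    (h : ∀ x, IsCoupling (π x) ((κ x).map f) ((η x).map g)) :
    ∃ π' : Kernel X (A × B), ∀ x,
      IsCoupling (π' x) (κ x) (η x) ∧ (π' x).map (Prod.map f g) = π x := by
  have : Nonempty T := ⟨g (Classical.arbitrary B)⟩
  obtain ⟨π₁, hπ₁⟩ := exists_kernel_lift_fst hf fun x => (h x).1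
  have : IsMarkovKernel π₁ :=
    ⟨fun x => IsCoupling.isProbabilityMeasure (μ := κ x) ⟨(hπ₁ x).1, rfl⟩⟩
  obtain ⟨π₂, hπ₂⟩ := exists_kernel_lift_fst (κ := η) (π := π₁.map Prod.swap) hg fun x => by
    rw [← (h x).2, ← (hπ₁ x).2, Kernel.map_apply _ measurable_swap,
      Measure.map_map measurable_fst measurable_swap, Measure.map_map measurable_snd (by fun_prop)]
    rfl
  refine ⟨π₂.map Prod.swap, fun x => ?_⟩
  have hswap : (π₂ x).map (Prod.map g id) = (π₁ x).map Prod.swap :=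
    (hπ₂ x).2.trans (Kernel.map_apply _ measurable_swap x)
  rw [Kernel.map_apply _ measurable_swap]
  refine ⟨⟨?_, ?_⟩, ?_⟩
  · have := congrArg (Measure.map Prod.snd) hswap
    rw [Measure.map_map measurable_snd (by fun_prop),
      Measure.map_map measurable_snd measurable_swap] at this
    rw [Measure.map_map measurable_fst measurable_swap]
    exact this.trans (hπ₁ x).1
  · rw [Measure.map_map measurable_snd measurable_swap]
    exact (hπ₂ x).1
  · have := congrArg (Measure.map fun w => (f w.2, w.1)) hswap
    rw [Measure.map_map (by fun_prop) (by fun_prop),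
      Measure.map_map (by fun_prop) measurable_swap] at this
    rw [Measure.map_map (by fun_prop) measurable_swap]
    exact this.trans (hπ₁ x).2

end Lift

section Triangle

variable {E : Type*} [MeasurableSpace E] {p : ℝ} {d : E → E → ℝ}

lemma wassersteinDist_triangle [StandardBorelSpace E] (hp : 1 ≤ p)
    (hd : Measurable fun z : E × E => d z.1 z.2) (htri : ∀ x y z, d x z ≤ d x y + d y z)
    (μ ν ρ : Measure E) [IsProbabilityMeasure ν] :
    wassersteinDist p d μ ρ ≤ wassersteinDist p d μ ν + wassersteinDist p d ν ρ := by
  refine ENNReal.le_iInf₂_add_iInf₂ fun γ₁ h₁ γ₂ h₂ => ?_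
  have : Nonempty E := nonempty_of_isProbabilityMeasure ν
  have := h₁.swap.isProbabilityMeasure
  have := h₂.isProbabilityMeasure
  obtain ⟨θ', hθ⟩ := exists_kernel_gluing (Kernel.const Unit (γ₁.map Prod.swap))
    (Kernel.const Unit γ₂) fun _ => h₁.swap.1.trans h₂.1.symm
  obtain ⟨θ, hθ₁, hθ₂⟩ : ∃ θ : Measure (E × E × E),
      θ.map (Prod.map id Prod.fst) = γ₁.map Prod.swap ∧ θ.map (Prod.map id Prod.snd) = γ₂ :=
    ⟨θ' (), hθ ()⟩
  have h₃ : IsCoupling (θ.map Prod.snd) μ ρ := by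
    constructor
    · rw [← h₁.swap.2, ← hθ₁, Measure.map_map measurable_fst measurable_snd,
        Measure.map_map measurable_snd (by fun_prop)]
      rfl
    · rw [← h₂.2, ← hθ₂, Measure.map_map measurable_snd measurable_snd,
        Measure.map_map measurable_snd (by fun_prop)]
      rfl
  have hc : Measurable fun z : E × E => ENNReal.ofReal (d z.1 z.2) := hd.ennreal_ofReal
  calc wassersteinDist p d μ ρ
      ≤ eLpNorm' (fun z => ENNReal.ofReal (d z.1 z.2)) p (θ.map Prod.snd) :=
        wassersteinDist_le_eLpNorm' h₃
    _ = eLpNorm' (fun w : E × E × E => ENNReal.ofReal (d w.2.1 w.2.2)) p θ :=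
        eLpNorm'_map_measure hc measurable_snd
    _ ≤ eLpNorm' (fun w : E × E × E => ENNReal.ofReal (d w.2.1 w.1)) p θ +
          eLpNorm' (fun w : E × E × E => ENNReal.ofReal (d w.1 w.2.2)) p θ :=
        eLpNorm'_le_add hp (hc.comp (by fun_prop : Measurable fun w : E × E × E => (w.2.1, w.1)))
          (hc.comp (by fun_prop : Measurable fun w : E × E × E => (w.1, w.2.2))) fun w =>
          (ENNReal.ofReal_le_ofReal (htri _ w.1 _)).trans ENNReal.ofReal_add_le
    _ = eLpNorm' (fun z => ENNReal.ofReal (d z.1 z.2)) p γ₁ +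
          eLpNorm' (fun z => ENNReal.ofReal (d z.1 z.2)) p γ₂ := by
        rw [← hθ₂, eLpNorm'_map_measure hc (by fun_prop)]
        congr 1
        have h := eLpNorm'_map_measure (p := p) (μ := γ₁) (hc.comp measurable_swap) measurable_swap
        rw [← hθ₁, eLpNorm'_map_measure (hc.comp measurable_swap) (by fun_prop)] at h
        exact h

end Triangle

/-! ### Measurable selection of couplings -/

section Completion

variable {A B : Type*} [MeasurableSpace A] [MeasurableSpace B]

/-- The completion of a subcoupling `m` of `μ` and `ν` by a multiple of the product of the
missing masses. Total mass `1` of `μ` and `ν` is built into the normalizing constant. -/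
def completeCoupling (m : Measure (A × B)) (μ : Measure A) (ν : Measure B) : Measure (A × B) :=
  m + (1 - m .univ)⁻¹ • (μ - m.map Prod.fst).prod (ν - m.map Prod.snd)

variable {m : Measure (A × B)} {μ : Measure A} {ν : Measure B}

lemma inv_smul_smul_of_measure_univ_eq {ρ : Measure A} {c : ℝ≥0∞} (hρ : ρ .univ = c)
    (hc : c ≠ ∞) : c⁻¹ • c • ρ = ρ := by
  rcases eq_or_ne c 0 with rfl | h0
  · simp [Measure.measure_univ_eq_zero.1 hρ]
  · rw [smul_smul, ENNReal.inv_mul_cancel h0 hc, one_smul]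

lemma isCoupling_completeCoupling [IsProbabilityMeasure μ] [IsProbabilityMeasure ν]
    [IsFiniteMeasure m] (hμ : m.map Prod.fst ≤ μ) (hν : m.map Prod.snd ≤ ν) :
    IsCoupling (completeCoupling m μ ν) μ ν := by
  have hμu : (μ - m.map Prod.fst) .univ = 1 - m .univ := by
    rw [Measure.sub_apply .univ hμ, measure_univ, Measure.map_apply measurable_fst .univ,
      Set.preimage_univ]
  have hνu : (ν - m.map Prod.snd) .univ = 1 - m .univ := by
    rw [Measure.sub_apply .univ hν, measure_univ, Measure.map_apply measurable_snd .univ,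
      Set.preimage_univ]
  constructor
  · rw [completeCoupling, Measure.map_add _ _ measurable_fst, Measure.map_smul,
      Measure.map_fst_prod, hνu, inv_smul_smul_of_measure_univ_eq hμu (by finiteness), add_comm,
      Measure.sub_add_cancel_of_le hμ]
  · rw [completeCoupling, Measure.map_add _ _ measurable_snd, Measure.map_smul,
      Measure.map_snd_prod, hμu, inv_smul_smul_of_measure_univ_eq hνu (by finiteness), add_comm,
      Measure.sub_add_cancel_of_le hν]

lemma lintegral_completeCoupling_le {γ : Measure (A × B)} [IsProbabilityMeasure γ]
    (hγ : IsCoupling γ μ ν) (hm : m ≤ γ) {D : A × B → ℝ≥0∞} {φ : A → ℝ≥0∞} {ψ : B → ℝ≥0∞}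
    (hφ : Measurable φ) (hψ : Measurable ψ) (hD : ∀ z, D z ≤ φ z.1 + ψ z.2) :
    ∫⁻ z, D z ∂(completeCoupling m μ ν) ≤
      ∫⁻ z, D z ∂γ + ∫⁻ z, (φ z.1 + ψ z.2) ∂(γ - m) := by
  have := isFiniteMeasure_of_le γ hm
  set ρ := γ - m
  have hadd : ρ + m = γ := Measure.sub_add_cancel_of_le hm
  have hμ : μ - m.map Prod.fst = ρ.map Prod.fst := by
    rw [← hγ.1, ← hadd, Measure.map_add _ _ measurable_fst, Measure.add_sub_cancel]
  have hν : ν - m.map Prod.snd = ρ.map Prod.snd := by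
    rw [← hγ.2, ← hadd, Measure.map_add _ _ measurable_snd, Measure.add_sub_cancel]
  have hρ : 1 - m .univ = ρ .univ := by
    rw [Measure.sub_apply .univ hm, measure_univ (μ := γ)]
  have hprod : ∫⁻ z, D z ∂(ρ.map Prod.fst).prod (ρ.map Prod.snd) ≤
      ρ .univ * ∫⁻ z, (φ z.1 + ψ z.2) ∂ρ := by
    refine (lintegral_mono hD).trans_eq ?_
    rw [lintegral_prod _ (by fun_prop), lintegral_add_left (by fun_prop)]
    simp_rw [lintegral_add_left measurable_const, lintegral_const]
    rw [lintegral_add_right _ measurable_const, lintegral_const,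
      lintegral_mul_const _ (by fun_prop), lintegral_map hφ measurable_fst,
      lintegral_map hψ measurable_snd, Measure.map_apply measurable_fst .univ,
      Measure.map_apply measurable_snd .univ, Set.preimage_univ, Set.preimage_univ]
    ring
  rw [completeCoupling, lintegral_add_measure, lintegral_smul_measure, hμ, hν, hρ]
  refine add_le_add (lintegral_mono' hm le_rfl) ?_
  calc _ ≤ (ρ .univ)⁻¹ * (ρ .univ * ∫⁻ z, (φ z.1 + ψ z.2) ∂ρ) := mul_le_mul_right hprod _
    _ ≤ _ := by
      rw [← mul_assoc]
      exact mul_le_of_le_one_left' (ENNReal.inv_mul_le_one _)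

end Completion

lemma exists_rat_ofReal_le_le_add {t δ : ℝ≥0∞} (ht : t ≠ ∞) (hδ : δ ≠ 0) :
    ∃ q : ℚ, ENNReal.ofReal q ≤ t ∧ t ≤ ENNReal.ofReal q + δ := by
  rcases eq_or_ne t 0 with rfl | h0
  · exact ⟨0, by simp⟩
  obtain ⟨q, -, hlt, hgt⟩ := ENNReal.lt_iff_exists_rat_btwn.1 (ENNReal.sub_lt_self ht h0 hδ)
  exact ⟨q, hgt.le, tsub_le_iff_right.1 hlt.le⟩

section Countable

variable {X S T ι : Type*} [MeasurableSpace X] [MeasurableSpace S] [MeasurableSpace T]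
  [MeasurableSpace ι] [MeasurableSingletonClass S] [MeasurableSingletonClass T]
  [MeasurableSingletonClass ι]

lemma measure_sub_apply_singleton (μ m : Measure S) [IsFiniteMeasure m] (a : S) :
    (μ - m) {a} = μ {a} - m {a} := by
  have ha := measurableSet_singleton a
  rcases le_total (μ {a}) (m {a}) with h | h
  · rw [tsub_eq_zero_of_le h]
    refine Measure.sub_apply_eq_zero_of_restrict_le_restrict ?_ ha
    rw [Measure.restrict_singleton, Measure.restrict_singleton]
    gcongr
  · rw [← Measure.restrict_apply_self (μ - m), Measure.restrict_sub_eq_restrict_sub_restrict ha,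
      Measure.sub_apply ha, Measure.restrict_apply_self, Measure.restrict_apply_self]
    rw [Measure.restrict_singleton, Measure.restrict_singleton]
    gcongr

/-- The finitely supported measure with rational weights `c` (negative weights count as zero);
there are only countably many of them. -/
def atomicMeasure (c : ι →₀ ℚ) : Measure ι :=
  Measure.sum fun i => ENNReal.ofReal (c i) • Measure.dirac i

lemma atomicMeasure_singleton (c : ι →₀ ℚ) (i : ι) :
    atomicMeasure c {i} = ENNReal.ofReal (c i) :=
  Measure.sum_smul_dirac_singleton

variable [Countable S]

lemma measurable_measure_of_singleton {f : X → Measure S} (h : ∀ a, Measurable fun x => f x {a}) :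
    Measurable f := by
  refine Measure.measurable_measure.2 fun s hs => ?_
  simp_rw [← Measure.tsum_indicator_apply_singleton _ s hs]
  refine .tsum fun a => ?_
  by_cases ha : a ∈ s <;> simp [ha, h]

lemma measurable_completeCoupling [Countable T] (m : Measure (S × T)) [IsFiniteMeasure m]
    (κ : Kernel X S) [IsFiniteKernel κ] (η : Kernel X T) [IsFiniteKernel η] :
    Measurable fun x => completeCoupling m (κ x) (η x) := by
  refine measurable_measure_of_singleton fun z => ?_
  have h (x : X) : completeCoupling m (κ x) (η x) {z} = m {z} + (1 - m .univ)⁻¹ *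
      ((κ x {z.1} - m.map Prod.fst {z.1}) * (η x {z.2} - m.map Prod.snd {z.2})) := by
    rw [completeCoupling, Measure.add_apply, Measure.smul_apply, ← Prod.mk.eta (p := z),
      ← Set.singleton_prod_singleton, Measure.prod_prod, measure_sub_apply_singleton,
      measure_sub_apply_singleton, smul_eq_mul]
  have hκ := κ.measurable_coe (measurableSet_singleton z.1)
  have hη := η.measurable_coe (measurableSet_singleton z.2)
  simp_rw [h]
  fun_prop

variable [Countable ι]

instance isFiniteMeasure_atomicMeasure (c : ι →₀ ℚ) : IsFiniteMeasure (atomicMeasure c) := by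
  rw [isFiniteMeasure_iff, ← Measure.tsum_indicator_apply_singleton _ _ .univ]
  simp only [Set.indicator_univ, atomicMeasure_singleton]
  rw [tsum_eq_sum (s := c.support) fun i hi => by simp [Finsupp.notMem_support_iff.1 hi]]
  exact ENNReal.sum_lt_top.2 fun i _ => ENNReal.ofReal_lt_top

lemma measure_le_iff_singleton {μ ν : Measure S} : μ ≤ ν ↔ ∀ a, μ {a} ≤ ν {a} := by
  refine ⟨fun h a => h _, fun h => Measure.le_iff.2 fun s hs => ?_⟩
  rw [← Measure.tsum_indicator_apply_singleton _ s hs,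
    ← Measure.tsum_indicator_apply_singleton _ s hs]
  exact ENNReal.tsum_le_tsum fun a => Set.indicator_le_indicator (h a)

lemma exists_atomicMeasure_le (γ : Measure ι) [IsFiniteMeasure γ] {w : ι → ℝ≥0∞}
    (hw : ∀ i, w i ≠ ∞) (hint : ∫⁻ i, w i ∂γ ≠ ∞) {ε : ℝ≥0∞} (hε : ε ≠ 0) :
    ∃ c : ι →₀ ℚ, atomicMeasure c ≤ γ ∧ ∫⁻ i, w i ∂(γ - atomicMeasure c) ≤ ε := by
  classical
  have hε2 : ε / 2 ≠ 0 := (ENNReal.half_pos hε).ne'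
  rw [lintegral_countable'] at hint
  obtain ⟨S, hS⟩ := ((ENNReal.tendsto_tsum_compl_atTop_zero hint).eventually
    (gt_mem_nhds (ENNReal.half_pos hε))).exists
  set W : ℝ≥0∞ := ∑ i ∈ S, w i
  have hW : W ≠ ∞ := ENNReal.sum_ne_top.2 fun i _ => hw i
  choose q hqle hleq using fun i => exists_rat_ofReal_le_le_add (measure_ne_top γ {i})
    (ENNReal.div_ne_zero.2 ⟨hε2, by finiteness⟩ : ε / 2 / (W + 1) ≠ 0)
  set c := Finsupp.indicator S fun i _ => q i
  refine ⟨c, measure_le_iff_singleton.2 fun i => ?_, ?_⟩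
  · rw [atomicMeasure_singleton]
    by_cases hi : i ∈ S <;> simp [c, hi, hqle]
  · rw [lintegral_countable']
    simp_rw [measure_sub_apply_singleton, atomicMeasure_singleton]
    calc ∑' i, w i * (γ {i} - ENNReal.ofReal (c i))
        ≤ ∑' i, ((S : Set ι).indicator (fun i => w i * (ε / 2 / (W + 1))) i +
            (S : Set ι)ᶜ.indicator (fun i => w i * γ {i}) i) := by
          refine ENNReal.tsum_le_tsum fun i => ?_
          by_cases hi : i ∈ S
          · simpa [hi, c] using mul_le_mul_right (tsub_le_iff_left.2 (hleq i)) (w i)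
          · simp [hi, c]
      _ = W * (ε / 2 / (W + 1)) + ∑' i : {i // i ∉ S}, w i * γ {(i : ι)} := by
          rw [ENNReal.tsum_add, ← tsum_subtype, ← tsum_subtype,
            Finset.tsum_subtype' S fun i => w i * (ε / 2 / (W + 1)), ← Finset.sum_mul]
          rfl
      _ ≤ ε / 2 + ε / 2 := by
          refine add_le_add ?_ hS.le
          calc W * (ε / 2 / (W + 1)) ≤ (W + 1) * (ε / 2 / (W + 1)) := by gcongr; exact le_self_add
            _ ≤ ε / 2 := ENNReal.mul_div_le
      _ = ε := ENNReal.add_halves ε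

end Countable

lemma exists_measurable_selection {X Z ι : Type*} [MeasurableSpace X] [MeasurableSpace Z]
    [Countable ι] [Nonempty ι] {f : ι → X → Z} (hf : ∀ i, Measurable (f i)) {s : ι → Set X}
    (hs : ∀ i, MeasurableSet (s i)) (h : ∀ x, ∃ i, x ∈ s i) :
    ∃ g : X → Z, Measurable g ∧ ∀ x, ∃ i, x ∈ s i ∧ g x = f i x := by
  classical
  obtain ⟨e, he⟩ := exists_surjective_nat ι
  have hex (x : X) : ∃ k, x ∈ s (e k) := (h x).imp' _ fun i hi => (he i).choose_spec.symm ▸ hi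
  have hg : Measurable fun w : ℕ × X => f (e w.1) w.2 :=
    measurable_from_prod_countable_right fun k => hf (e k)
  exact ⟨_, hg.comp ((measurable_find hex fun k => hs (e k)).prodMk measurable_id),
    fun x => ⟨_, Nat.find_spec (hex x), rfl⟩⟩

section Discrete

variable {X S T : Type*} [MeasurableSpace X] [MeasurableSpace S] [MeasurableSpace T]
  [Countable S] [MeasurableSingletonClass S]

lemma measurableSet_le_kernel (m : Measure S) (κ : Kernel X S) :
    MeasurableSet {x | m ≤ κ x} := by
  simp_rw [measure_le_iff_singleton, Set.ofPred_forall]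
  exact .iInter fun a => measurableSet_le measurable_const (κ.measurable_coe (.singleton a))

variable [Countable T] [MeasurableSingletonClass T]

lemma exists_lintegral_completeCoupling_atomicMeasure_le {μ : Measure S} [IsProbabilityMeasure μ]
    {ν : Measure T} {γ : Measure (S × T)} (hγ : IsCoupling γ μ ν) {D : S × T → ℝ≥0∞}
    {φ : S → ℝ≥0∞} {ψ : T → ℝ≥0∞} (hφ : ∀ s, φ s ≠ ∞) (hψ : ∀ t, ψ t ≠ ∞)
    (hD : ∀ z, D z ≤ φ z.1 + ψ z.2) (hint : ∫⁻ z, (φ z.1 + ψ z.2) ∂γ ≠ ∞) {b : ℝ≥0∞}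
    (hb : ∫⁻ z, D z ∂γ < b) :
    ∃ c : S × T →₀ ℚ, (atomicMeasure c).map Prod.fst ≤ μ ∧ (atomicMeasure c).map Prod.snd ≤ ν ∧
      ∫⁻ z, D z ∂(completeCoupling (atomicMeasure c) μ ν) ≤ b := by
  have := hγ.isProbabilityMeasure
  obtain ⟨c, hle, hrest⟩ := exists_atomicMeasure_le γ (fun z => add_ne_top.2 ⟨hφ z.1, hψ z.2⟩)
    hint (tsub_pos_of_lt hb).ne'
  refine ⟨c, hγ.1 ▸ Measure.map_mono hle measurable_fst,
    hγ.2 ▸ Measure.map_mono hle measurable_snd, ?_⟩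
  calc ∫⁻ z, D z ∂(completeCoupling (atomicMeasure c) μ ν)
      ≤ ∫⁻ z, D z ∂γ + ∫⁻ z, (φ z.1 + ψ z.2) ∂(γ - atomicMeasure c) :=
        lintegral_completeCoupling_le hγ hle (measurable_of_countable φ)
          (measurable_of_countable ψ) hD
    _ ≤ ∫⁻ z, D z ∂γ + (b - ∫⁻ z, D z ∂γ) := by gcongr
    _ = b := add_tsub_cancel_of_le hb.le

/- Completions of finitely supported rational subcouplings form a countable family of candidates
whose marginals are exact, so a good candidate can be chosen measurably. -/
theorem exists_kernel_isCoupling_lintegral_le {κ : Kernel X S} [IsMarkovKernel κ]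
    {η : Kernel X T} [IsMarkovKernel η] {D : S × T → ℝ≥0∞} {φ : S → ℝ≥0∞} {ψ : T → ℝ≥0∞}
    (hφ : ∀ s, φ s ≠ ∞) (hψ : ∀ t, ψ t ≠ ∞) (hD : ∀ z, D z ≤ φ z.1 + ψ z.2)
    {F : X → ℝ≥0∞} (hF : Measurable F)
    (h : ∀ x, F x ≠ ∞ → ∃ γ, IsCoupling γ (κ x) (η x) ∧ ∫⁻ z, D z ∂γ < F x ∧
      ∫⁻ z, (φ z.1 + ψ z.2) ∂γ ≠ ∞) :
    ∃ π : Kernel X (S × T), ∀ x, IsCoupling (π x) (κ x) (η x) ∧ ∫⁻ z, D z ∂(π x) ≤ F x := by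
  have hcomplete (c : S × T →₀ ℚ) : Measurable fun x =>
      completeCoupling (atomicMeasure c) (κ x) (η x) := measurable_completeCoupling _ κ η
  have hgood (c : S × T →₀ ℚ) : MeasurableSet
      ({x | (atomicMeasure c).map Prod.fst ≤ κ x} ∩ ({x | (atomicMeasure c).map Prod.snd ≤ η x} ∩
        {x | ∫⁻ z, D z ∂(completeCoupling (atomicMeasure c) (κ x) (η x)) ≤ F x})) :=
    (measurableSet_le_kernel _ κ).inter ((measurableSet_le_kernel _ η).inter (measurableSet_le
      ((Measure.measurable_lintegral (measurable_of_countable D)).comp (hcomplete c)) hF))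
  obtain ⟨g, hg, hsel⟩ := exists_measurable_selection hcomplete hgood fun x => by
    rcases eq_or_ne (F x) ∞ with hx | hx
    · refine ⟨0, ?_, ?_, by simp [hx]⟩ <;> simp [atomicMeasure, Measure.zero_le]
    · obtain ⟨γ, hγ, hlt, hint⟩ := h x hx
      exact exists_lintegral_completeCoupling_atomicMeasure_le hγ hφ hψ hD hint hlt
  refine ⟨⟨g, hg⟩, fun x => ?_⟩
  obtain ⟨c, ⟨hfst, hsnd, hle⟩, hgx⟩ := hsel x
  rw [Kernel.coe_mk, hgx]
  exact ⟨isCoupling_completeCoupling hfst hsnd, hle⟩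

variable {E : Type*} [PseudoEMetricSpace E]

lemma exists_kernel_isCoupling_eLpNorm'_le_of_countable {p : ℝ} (hp : 1 ≤ p) {κ : Kernel X S}
    [IsMarkovKernel κ] {η : Kernel X T} [IsMarkovKernel η] {q : S → E} {q' : T → E} {o : E}
    (hq : ∀ s, edist (q s) o ≠ ∞) (hq' : ∀ t, edist (q' t) o ≠ ∞)
    {G : X → ℝ≥0∞} (hG : Measurable G)
    (hκ : ∀ x, eLpNorm' (fun s => edist (q s) o) p (κ x) ≠ ∞)
    (h : ∀ x, G x ≠ ∞ → ∃ γ, IsCoupling γ (κ x) (η x) ∧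
      eLpNorm' (fun z => edist (q z.1) (q' z.2)) p γ < G x) :
    ∃ π : Kernel X (S × T), ∀ x, IsCoupling (π x) (κ x) (η x) ∧
      eLpNorm' (fun z => edist (q z.1) (q' z.2)) p (π x) ≤ G x := by
  have hp0 : 0 < p := by linarith
  let φ (s : S) : ℝ≥0∞ := 2 ^ (p - 1) * edist (q s) o ^ p
  let ψ (t : T) : ℝ≥0∞ := 2 ^ (p - 1) * edist (q' t) o ^ p
  have hφ (s : S) : φ s ≠ ∞ := by have := hq s; finiteness
  have hψ (t : T) : ψ t ≠ ∞ := by have := hq' t; finiteness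
  have hD (z : S × T) : edist (q z.1) (q' z.2) ^ p ≤ φ z.1 + ψ z.2 :=
    calc edist (q z.1) (q' z.2) ^ p ≤ (edist (q z.1) o + edist (q' z.2) o) ^ p :=
        ENNReal.rpow_le_rpow (edist_triangle_right _ _ _) hp0.le
      _ ≤ 2 ^ (p - 1) * (edist (q z.1) o ^ p + edist (q' z.2) o ^ p) :=
        ENNReal.rpow_add_le_mul_rpow_add_rpow _ _ hp
      _ = φ z.1 + ψ z.2 := mul_add _ _ _
  have hint {γ : Measure (S × T)} {x : X} (hγ : IsCoupling γ (κ x) (η x))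
      (hγp : eLpNorm' (fun z => edist (q z.1) (q' z.2)) p γ ≠ ∞) :
      ∫⁻ z, (φ z.1 + ψ z.2) ∂γ ≠ ∞ := by
    have hfst : eLpNorm' (fun z : S × T => edist (q z.1) o) p γ ≠ ∞ := by
      rw [← eLpNorm'_map_measure (f := fun s => edist (q s) o) (measurable_of_countable _)
        measurable_fst, hγ.1]
      exact hκ x
    have hsnd : eLpNorm' (fun z : S × T => edist (q' z.2) o) p γ ≠ ∞ := by
      refine ne_top_of_le_ne_top (ENNReal.add_ne_top.2 ⟨hγp, hfst⟩)
        (eLpNorm'_le_add hp (measurable_of_countable _) (measurable_of_countable _) fun z => ?_)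
      rw [edist_comm (q z.1) (q' z.2)]
      exact edist_triangle _ _ _
    rw [lintegral_add_left (measurable_of_countable _),
      lintegral_const_mul _ (measurable_of_countable _),
      lintegral_const_mul _ (measurable_of_countable _),
      lintegral_rpow_eq_eLpNorm'_rpow hp0, lintegral_rpow_eq_eLpNorm'_rpow hp0]
    finiteness
  obtain ⟨π, hπ⟩ := exists_kernel_isCoupling_lintegral_le hφ hψ hD (hG.pow_const p) fun x hx => by
    obtain ⟨γ, hγ, hlt⟩ := h x fun hx' => hx (by simp [hx', hp0])
    refine ⟨γ, hγ, ?_, hint hγ hlt.ne_top⟩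
    rwa [lintegral_rpow_eq_eLpNorm'_rpow hp0, ENNReal.rpow_lt_rpow_iff hp0]
  refine ⟨π, fun x => ⟨(hπ x).1, ?_⟩⟩
  have := (hπ x).2
  rwa [lintegral_rpow_eq_eLpNorm'_rpow hp0, ENNReal.rpow_le_rpow_iff hp0] at this

end Discrete

section Metric

lemma exists_measurable_quantizer {E : Type*} [MeasurableSpace E] [PseudoEMetricSpace E]
    [TopologicalSpace.SeparableSpace E] [OpensMeasurableSpace E] [Nonempty E] {ε : ℝ≥0∞}
    (hε : ε ≠ 0) :
    ∃ (q : ℕ → E) (σ : E → ℕ), Measurable σ ∧ ∀ y, edist (q (σ y)) y ≤ ε := by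
  obtain ⟨σ, hσ, hsel⟩ := exists_measurable_selection (X := E) (f := fun k _ => k)
    (s := fun k => Metric.eball (TopologicalSpace.denseSeq E k) ε) (fun k => measurable_const)
    (fun k => Metric.isOpen_eball.measurableSet) fun y => by
      obtain ⟨k, hk⟩ := (TopologicalSpace.denseRange_denseSeq E).exists_mem_open
        Metric.isOpen_eball ⟨y, Metric.mem_eball_self (pos_iff_ne_zero.2 hε)⟩
      exact ⟨k, Metric.mem_eball'.2 hk⟩
  refine ⟨TopologicalSpace.denseSeq E, σ, hσ, fun y => ?_⟩
  obtain ⟨k, hk, rfl⟩ := hsel y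
  exact (Metric.mem_eball'.1 hk).le

lemma edist_le_edist_add_two_mul {E : Type*} [PseudoEMetricSpace E] {a a' b b' : E} {ε : ℝ≥0∞}
    (ha : edist a a' ≤ ε) (hb : edist b b' ≤ ε) : edist a b ≤ edist a' b' + 2 * ε :=
  calc edist a b ≤ edist a a' + edist a' b' + edist b' b := edist_triangle4 _ _ _ _
    _ ≤ ε + edist a' b' + ε := by rw [edist_comm b']; gcongr
    _ = edist a' b' + 2 * ε := by ring

variable {E X : Type*} [MeasurableSpace E] [PseudoMetricSpace E] [SecondCountableTopology E]
  [OpensMeasurableSpace E] [MeasurableSpace X] {p : ℝ} {κ η : Kernel X E} [IsMarkovKernel κ]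
  [IsMarkovKernel η] {o : E} {G : X → ℝ≥0∞}

lemma exists_kernel_isCoupling_map_eLpNorm'_le (hp : 1 ≤ p) {q : ℕ → E} {σ : E → ℕ}
    (hσ : Measurable σ) {ε : ℝ≥0} (hε : ε ≠ 0) (hq : ∀ y, edist (q (σ y)) y ≤ ε)
    (hκ : ∀ x, eLpNorm' (edist · o) p (κ x) ≠ ∞) (hG : Measurable G)
    (hW : ∀ x, wassersteinDist p dist (κ x) (η x) ≤ G x) :
    ∃ π : Kernel X (ℕ × ℕ), ∀ x, IsCoupling (π x) ((κ x).map σ) ((η x).map σ) ∧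
      eLpNorm' (fun w => edist (q w.1) (q w.2)) p (π x) ≤ G x + (ε + 2 * ε) := by
  simp_rw [← Kernel.map_apply _ hσ]
  have := Kernel.IsMarkovKernel.map κ hσ
  have := Kernel.IsMarkovKernel.map η hσ
  refine exists_kernel_isCoupling_eLpNorm'_le_of_countable hp (fun _ => edist_ne_top _ o)
    (fun _ => edist_ne_top _ o) (hG.add_const _) (fun x => ?_) fun x hx => ?_
  · rw [Kernel.map_apply _ hσ, eLpNorm'_map_measure (measurable_of_countable _) hσ]
    refine ne_top_of_le_ne_top (ENNReal.add_ne_top.2 ⟨hκ x, ENNReal.coe_ne_top (r := ε)⟩)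
      (eLpNorm'_le_add_const hp (by fun_prop) fun y => ?_)
    exact (edist_triangle _ y o).trans ((add_comm _ _).trans_le (by gcongr; exact hq y))
  · have hGx : G x ≠ ∞ := (ENNReal.add_ne_top.1 hx).1
    obtain ⟨γ, hγ, hlt⟩ := exists_isCoupling_eLpNorm'_lt
      ((hW x).trans_lt (ENNReal.lt_add_right hGx (ENNReal.coe_ne_zero.2 hε)))
    simp_rw [← edist_dist] at hlt
    have := hγ.isProbabilityMeasure
    refine ⟨γ.map (Prod.map σ σ), ?_, ?_⟩
    · rw [Kernel.map_apply _ hσ, Kernel.map_apply _ hσ]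
      exact hγ.map hσ hσ
    · rw [eLpNorm'_map_measure (measurable_of_countable _) (hσ.prodMap hσ), ← add_assoc]
      exact lt_of_le_of_lt (eLpNorm'_le_add_const hp (by fun_prop) fun z : E × E =>
        edist_le_edist_add_two_mul (hq z.1) (hq z.2))
        (ENNReal.add_lt_add_right (by finiteness) hlt)

theorem exists_kernel_isCoupling_eLpNorm'_edist_le [StandardBorelSpace E] (hp : 1 ≤ p)
    (hκ : ∀ x, eLpNorm' (edist · o) p (κ x) ≠ ∞) (hG : Measurable G)
    (hW : ∀ x, wassersteinDist p dist (κ x) (η x) ≤ G x) {δ : ℝ≥0} (hδ : δ ≠ 0) :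
    ∃ π : Kernel X (E × E), ∀ x, IsCoupling (π x) (κ x) (η x) ∧
      eLpNorm' (fun z => edist z.1 z.2) p (π x) ≤ G x + δ := by
  have : Nonempty E := ⟨o⟩
  set ε : ℝ≥0 := δ / 5 with hεδ
  have hε : ε ≠ 0 := by positivity
  obtain ⟨q, σ, hσ, hq⟩ := exists_measurable_quantizer (E := E) (ENNReal.coe_ne_zero.2 hε)
  have hσσ := hσ.prodMap hσ
  have hquant : Measurable fun z : E × E => edist (q (σ z.1)) (q (σ z.2)) :=
    (measurable_of_countable fun w : ℕ × ℕ => edist (q w.1) (q w.2)).comp hσσ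
  obtain ⟨π₀, hπ₀⟩ := exists_kernel_isCoupling_map_eLpNorm'_le hp hσ hε hq hκ hG hW
  have : IsMarkovKernel π₀ := ⟨fun x =>
    have := Measure.isProbabilityMeasure_map (μ := κ x) hσ.aemeasurable
    (hπ₀ x).1.isProbabilityMeasure⟩
  obtain ⟨π, hπ⟩ := exists_kernel_lift_isCoupling hσ hσ fun x => (hπ₀ x).1
  refine ⟨π, fun x => ⟨(hπ x).1, ?_⟩⟩
  have := (hπ x).1.isProbabilityMeasure
  calc eLpNorm' (fun z => edist z.1 z.2) p (π x)
      ≤ eLpNorm' (fun z : E × E => edist (q (σ z.1)) (q (σ z.2))) p (π x) + 2 * ε :=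
        eLpNorm'_le_add_const hp hquant fun z => edist_le_edist_add_two_mul
          ((edist_comm _ _).trans_le (hq z.1)) ((edist_comm _ _).trans_le (hq z.2))
    _ = eLpNorm' (fun w => edist (q w.1) (q w.2)) p (π₀ x) + 2 * ε := by
        rw [← (hπ x).2, eLpNorm'_map_measure (measurable_of_countable _) hσσ]
        rfl
    _ ≤ G x + (ε + 2 * ε) + 2 * ε := by gcongr; exact (hπ₀ x).2
    _ = G x + δ := by
        rw [add_assoc]
        congr 1
        norm_cast
        rw [hεδ]
        ring

end Metric

/-! ### Relative entropy and transport inequalities -/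

section Entropy

variable {X Y : Type*} [MeasurableSpace X] [MeasurableSpace Y]

lemma relEntropy_eq_klDiv (ν μ : Measure X) [IsProbabilityMeasure ν] [IsProbabilityMeasure μ] :
    relEntropy ν μ = klDiv ν μ := by
  by_cases h : ν ≪ μ ∧ Integrable (llr ν μ) ν
  · rw [klDiv_of_ac_of_integrable h.1 h.2, probReal_univ, probReal_univ, add_sub_cancel_right]
    exact if_pos h
  · rw [klDiv_def, if_neg h]
    exact if_neg h

lemma klDiv_cond_ne_top {μ : Measure X} [IsProbabilityMeasure μ] {s : Set X}
    (hs : MeasurableSet s) : klDiv μ[|s] μ ≠ ∞ := by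
  rcases eq_or_ne (μ s) 0 with h | h
  · simp [cond_eq_zero_of_meas_eq_zero h]
  refine klDiv_ne_top cond_absolutelyContinuous
    ((integrable_const (Real.log (μ s)⁻¹.toReal)).congr ?_)
  filter_upwards [cond_absolutelyContinuous.ae_le (Measure.rnDeriv_smul_left_of_ne_top
    (μ.restrict s) μ (ENNReal.inv_ne_top.2 h)), cond_absolutelyContinuous.ae_le
    (Measure.rnDeriv_restrict_self μ hs), ae_cond_mem hs] with x hsmul hrestrict hx
  rw [llr, ProbabilityTheory.cond, hsmul, Pi.smul_apply, hrestrict, Set.indicator_of_mem hx,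
    smul_eq_mul, Pi.one_apply, mul_one]

variable [MeasurableSpace.CountableOrCountablyGenerated X Y] (κ η : Kernel X Y)

lemma measurable_ofReal_klFun_rnDeriv :
    Measurable fun w : X × Y => ENNReal.ofReal (klFun (κ.rnDeriv η w.1 w.2).toReal) :=
  (measurable_klFun.comp (κ.measurable_rnDeriv η).ennreal_toReal).ennreal_ofReal

variable [IsFiniteKernel κ] [IsFiniteKernel η]

lemma klDiv_kernel_eq_lintegral {x : X} (h : κ x ≪ η x) :
    klDiv (κ x) (η x) = ∫⁻ y, ENNReal.ofReal (klFun (κ.rnDeriv η x y).toReal) ∂(η x) := by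
  rw [klDiv_eq_lintegral_klFun_of_ac h]
  refine lintegral_congr_ae ?_
  filter_upwards [κ.rnDeriv_eq_rnDeriv_measure (η := η) (a := x)] with y hy
  rw [hy]

lemma measurable_klDiv_kernel : Measurable fun x => klDiv (κ x) (η x) := by
  classical
  have h : (fun x => klDiv (κ x) (η x)) = fun x => if κ x ≪ η x then
      ∫⁻ y, ENNReal.ofReal (klFun (κ.rnDeriv η x y).toReal) ∂(η x) else ∞ := by
    ext x
    split_ifs with hx
    · exact klDiv_kernel_eq_lintegral κ η hx
    · exact klDiv_of_not_ac hx
  rw [h]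
  exact Measurable.ite (Kernel.measurableSet_absolutelyContinuous κ η)
    (measurable_ofReal_klFun_rnDeriv κ η).lintegral_kernel_prod_right' measurable_const

lemma klDiv_compProd_right_eq_lintegral (μ : Measure X) [IsFiniteMeasure μ] :
    klDiv (μ ⊗ₘ κ) (μ ⊗ₘ η) = ∫⁻ x, klDiv (κ x) (η x) ∂μ := by
  by_cases hκη : ∀ᵐ x ∂μ, κ x ≪ η x
  swap
  · rw [klDiv_of_not_ac (Measure.absolutelyContinuous_compProd_right_iff.not.2 hκη)]
    refine (not_ne_iff.1 fun hfin => hκη ?_).symm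
    exact (ae_lt_top (measurable_klDiv_kernel κ η) hfin).mono fun x hx =>
      (klDiv_ne_top_iff.1 hx.ne).1
  have hac := Measure.absolutelyContinuous_compProd_right_iff.2 hκη
  have hdensity : μ ⊗ₘ κ = (μ ⊗ₘ η).withDensity (Function.uncurry (κ.rnDeriv η)) :=
    (Measure.compProd_congr (hκη.mono fun x hx => (Kernel.withDensity_rnDeriv_eq hx).symm)).trans
      (Measure.compProd_withDensity (κ.measurable_rnDeriv η))
  have hrnDeriv : (μ ⊗ₘ κ).rnDeriv (μ ⊗ₘ η) =ᵐ[μ ⊗ₘ η] Function.uncurry (κ.rnDeriv η) := by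
    rw [hdensity]
    exact Measure.rnDeriv_withDensity _ (κ.measurable_rnDeriv η)
  calc klDiv (μ ⊗ₘ κ) (μ ⊗ₘ η)
      = ∫⁻ w, ENNReal.ofReal (klFun ((μ ⊗ₘ κ).rnDeriv (μ ⊗ₘ η) w).toReal) ∂(μ ⊗ₘ η) :=
        klDiv_eq_lintegral_klFun_of_ac hac
    _ = ∫⁻ w, ENNReal.ofReal (klFun (κ.rnDeriv η w.1 w.2).toReal) ∂(μ ⊗ₘ η) :=
        lintegral_congr_ae (hrnDeriv.mono fun w hw => by simp only [hw, Function.uncurry])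
    _ = ∫⁻ x, ∫⁻ y, ENNReal.ofReal (klFun (κ.rnDeriv η x y).toReal) ∂(η x) ∂μ :=
        Measure.lintegral_compProd (measurable_ofReal_klFun_rnDeriv κ η)
    _ = ∫⁻ x, klDiv (κ x) (η x) ∂μ :=
        lintegral_congr_ae (hκη.mono fun x hx => (klDiv_kernel_eq_lintegral κ η hx).symm)

end Entropy

section Transport

variable {E : Type*} [MeasurableSpace E] {p C : ℝ} {μ : Measure E} [IsProbabilityMeasure μ]

lemma TpIneq.wassersteinDist_le {d : E → E → ℝ} (h : TpIneq p d C μ) (ν : Measure E)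
    [IsProbabilityMeasure ν] :
    wassersteinDist p d μ ν ≤ (ENNReal.ofReal (2 * C) * klDiv ν μ) ^ (1 / 2 : ℝ) := by
  rw [one_div, ENNReal.le_rpow_inv_iff two_pos, ENNReal.rpow_two, ← relEntropy_eq_klDiv]
  exact h ν ‹_›

/- Conditioning `μ` on a ball of positive measure gives a law of finite entropy with bounded
support, hence at finite distance from `μ`. -/
lemma TpIneq.eLpNorm'_edist_ne_top [PseudoMetricSpace E] [SecondCountableTopology E]
    [OpensMeasurableSpace E] (hp : 1 ≤ p) (h : TpIneq p dist C μ) (o : E) :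
    eLpNorm' (edist · o) p μ ≠ ∞ := by
  obtain ⟨N, hN⟩ : ∃ N : ℕ, μ (Metric.ball o N) ≠ 0 := by
    by_contra! hcon
    have := measure_iUnion_null hcon
    rw [Metric.iUnion_ball_nat, measure_univ] at this
    exact one_ne_zero this
  have hball : MeasurableSet (Metric.ball o N) := Metric.isOpen_ball.measurableSet
  have := cond_isProbabilityMeasure hN
  have hklDiv := klDiv_cond_ne_top (μ := μ) hball
  have hW : wassersteinDist p dist μ μ[|Metric.ball o N] < ∞ :=
    (h.wassersteinDist_le _).trans_lt (by finiteness)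
  obtain ⟨γ, hγ, hlt⟩ := exists_isCoupling_eLpNorm'_lt hW
  simp_rw [← edist_dist] at hlt
  have := hγ.isProbabilityMeasure
  have hbounded : eLpNorm' (fun z : E × E => edist z.2 o) p γ ≤ N := by
    rw [← eLpNorm'_map_measure (f := fun y => edist y o) (by fun_prop) measurable_snd, hγ.2]
    refine (eLpNorm'_mono_enorm_ae (g := fun _ => (N : ℝ≥0∞)) (by linarith) ?_).trans_eq ?_
    · filter_upwards [ae_cond_mem hball] with y hy
      exact (Metric.eball_ofReal (x := o) (ε := N) ▸ hy : y ∈ Metric.eball o _).le.trans (by simp)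
    · rw [eLpNorm'_const_of_isProbabilityMeasure _ (by linarith), enorm_eq_self]
  rw [← hγ.1, eLpNorm'_map_measure (by fun_prop) measurable_fst]
  refine ne_top_of_le_ne_top ?_
    (eLpNorm'_le_add hp (by fun_prop) (by fun_prop) fun z => edist_triangle _ z.2 _)
  have := hlt.ne_top
  have := ne_top_of_le_ne_top (ENNReal.natCast_ne_top N) hbounded
  finiteness

end Transport

section ChainRule

variable {X Y : Type*} [MeasurableSpace X] [MeasurableSpace Y]

lemma klDiv_map_measurableEquiv (e : X ≃ᵐ Y) (μ ν : Measure X) [IsFiniteMeasure μ]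
    [IsFiniteMeasure ν] : klDiv (μ.map e) (ν.map e) = klDiv μ ν := by
  refine (klDiv_map_le μ ν e.measurable).antisymm ?_
  have h := klDiv_map_le (μ.map e) (ν.map e) e.symm.measurable
  rwa [e.map_symm_map, e.map_symm_map] at h

lemma klDiv_compProd_eq_klDiv_fst_add_lintegral_condKernel [StandardBorelSpace Y] [Nonempty Y]
    (Q : Measure (X × Y)) [IsFiniteMeasure Q] (P : Measure X) [IsFiniteMeasure P]
    (κ : Kernel X Y) [IsMarkovKernel κ] :
    klDiv Q (P ⊗ₘ κ) = klDiv Q.fst P + ∫⁻ x, klDiv (Q.condKernel x) (κ x) ∂Q.fst := by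
  conv_lhs => rw [← Q.disintegrate Q.condKernel]
  rw [klDiv_compProd_eq_add, klDiv_compProd_right_eq_lintegral]

end ChainRule

section Chain

variable {E : Type*} [MeasurableSpace E]

/-- Appending a last coordinate, `((x_1, …, x_n), y) ↦ (x_1, …, x_n, y)`, as a measurable
equivalence; it identifies `E^n × E`, where measures are disintegrated, with `E^(n+1)`. -/
def snocMeasurableEquiv (E : Type*) [MeasurableSpace E] (n : ℕ) :
    (Fin n → E) × E ≃ᵐ (Fin (n + 1) → E) where
  toFun w := Fin.snoc w.1 w.2
  invFun x := (Fin.init x, x (Fin.last n))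
  left_inv w := by simp
  right_inv x := by simp
  measurable_toFun := measurable_pi_iff.2 <| Fin.lastCases (by simpa using measurable_snd)
    fun i => by simpa using measurable_fst.eval
  measurable_invFun :=
    (measurable_pi_lambda _ fun i => measurable_pi_apply i.castSucc).prodMk (measurable_pi_apply _)

@[simp]
lemma snocMeasurableEquiv_castSucc {n : ℕ} (w : (Fin n → E) × E) (i : Fin n) :
    snocMeasurableEquiv E n w i.castSucc = w.1 i :=
  Fin.snoc_castSucc (α := fun _ => E) w.2 w.1 i

@[simp]
lemma snocMeasurableEquiv_last {n : ℕ} (w : (Fin n → E) × E) :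
    snocMeasurableEquiv E n w (Fin.last n) = w.2 :=
  Fin.snoc_last (α := fun _ => E) w.2 w.1

variable (κ : (i : ℕ) → Kernel (Fin i → E) E) [∀ i, IsMarkovKernel (κ i)]

lemma chainMeasure_succ_eq_comp (n : ℕ) :
    chainMeasure (fun i => κ i) (n + 1) =
      (Kernel.id ×ₖ κ n).map (snocMeasurableEquiv E n) ∘ₘ chainMeasure (fun i => κ i) n := by
  refine congrArg (Measure.bind _) (funext fun x => ?_)
  rw [Kernel.map_apply _ (MeasurableEquiv.measurable _), Kernel.prod_apply, Kernel.id_apply,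
    Measure.dirac_prod, Measure.map_map (MeasurableEquiv.measurable _) measurable_prodMk_left]
  rfl

instance isProbabilityMeasure_chainMeasure (n : ℕ) :
    IsProbabilityMeasure (chainMeasure (fun i => κ i) n) := by
  induction n with
  | zero => exact Measure.dirac.isProbabilityMeasure
  | succ n ih =>
    rw [chainMeasure_succ_eq_comp]
    have := Kernel.IsMarkovKernel.map (Kernel.id ×ₖ κ n) (snocMeasurableEquiv E n).measurable
    infer_instance

lemma chainMeasure_succ (n : ℕ) :
    chainMeasure (fun i => κ i) (n + 1) =
      (chainMeasure (fun i => κ i) n ⊗ₘ κ n).map (snocMeasurableEquiv E n) := by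
  rw [chainMeasure_succ_eq_comp, Measure.compProd_eq_comp_prod,
    Measure.map_comp _ _ (MeasurableEquiv.measurable _)]

end Chain

lemma eLpNorm'_rpow_sum_mul_rpow {X ι : Type*} [MeasurableSpace X] (μ : Measure X) {p : ℝ}
    (hp : 0 < p) (s : Finset ι) (w : ι → ℝ≥0∞) {f : ι → X → ℝ≥0∞} (hf : ∀ k, Measurable (f k)) :
    eLpNorm' (fun x => (∑ k ∈ s, w k * f k x ^ p) ^ (1 / p)) p μ =
      (∑ k ∈ s, w k * eLpNorm' (f k) p μ ^ p) ^ (1 / p) := by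
  simp only [eLpNorm'_eq_lintegral_enorm, enorm_eq_self, one_div, ENNReal.rpow_inv_rpow hp.ne']
  rw [lintegral_finsetSum _ fun k _ => by fun_prop]
  simp only [lintegral_const_mul _ ((hf _).pow_const p)]

lemma eLpNorm'_compProd_le {X Y : Type*} [MeasurableSpace X] [MeasurableSpace Y] {p : ℝ}
    (hp : 0 < p) {μ : Measure X} [SFinite μ] {κ : Kernel X Y} [IsSFiniteKernel κ]
    {f : X × Y → ℝ≥0∞} (hf : Measurable f) {g : X → ℝ≥0∞}
    (h : ∀ x, eLpNorm' (fun y => f (x, y)) p (κ x) ≤ g x) :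
    eLpNorm' f p (μ ⊗ₘ κ) ≤ eLpNorm' g p μ := by
  refine ENNReal.rpow_le_rpow ?_ (by positivity)
  simp only [enorm_eq_self]
  rw [Measure.lintegral_compProd (by fun_prop)]
  refine lintegral_mono fun x => ?_
  rw [lintegral_rpow_eq_eLpNorm'_rpow hp]
  gcongr
  exact h x

section Step

variable {X E : Type*} [MeasurableSpace X] [MeasurableSpace E] [StandardBorelSpace E]
  [PseudoMetricSpace E] [SecondCountableTopology E] [OpensMeasurableSpace E] {p C : ℝ}

lemma TpIneq.wassersteinDist_le_add (hp : 1 ≤ p) {μ ν : Measure E} [IsProbabilityMeasure ν]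
    (h : TpIneq p dist C ν) (ρ : Measure E) [IsProbabilityMeasure ρ] :
    wassersteinDist p dist μ ρ ≤
      wassersteinDist p dist μ ν + (ENNReal.ofReal (2 * C) * klDiv ρ ν) ^ (1 / 2 : ℝ) :=
  (wassersteinDist_triangle hp measurable_dist dist_triangle μ ν ρ).trans
    (add_le_add_right (h.wassersteinDist_le ρ) _)

/- Given the pasts `(x, x')`, the next coordinates are coupled nearly optimally, the law `κ x'`
serving as intermediate point between `κ x` and `ρ x'`. -/
lemma exists_isCoupling_compProd (hp : 1 ≤ p) (hp2 : p ≤ 2) {P Q : Measure X}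
    [IsProbabilityMeasure P] [IsProbabilityMeasure Q] {γ : Measure (X × X)} (hγ : IsCoupling γ P Q)
    (κ ρ : Kernel X E) [IsMarkovKernel κ] [IsMarkovKernel ρ] (hT : ∀ x, TpIneq p dist C (κ x))
    {f : X × X → ℝ≥0∞} (hf : Measurable f)
    (hW : ∀ z, wassersteinDist p dist (κ z.1) (κ z.2) ≤ f z) {δ : ℝ≥0} (hδ : δ ≠ 0) :
    ∃ Γ : Measure ((X × E) × (X × E)), IsCoupling Γ (P ⊗ₘ κ) (Q ⊗ₘ ρ) ∧
      Γ.map (fun w => (w.1.1, w.2.1)) = γ ∧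
      eLpNorm' (fun w => edist w.1.2 w.2.2) p Γ ≤ eLpNorm' f p γ +
        (ENNReal.ofReal (2 * C) * ∫⁻ x, klDiv (ρ x) (κ x) ∂Q) ^ (1 / 2 : ℝ) + δ := by
  have := hγ.isProbabilityMeasure
  obtain ⟨x₀⟩ := nonempty_of_isProbabilityMeasure P
  obtain ⟨o⟩ := nonempty_of_isProbabilityMeasure (κ x₀)
  have hkl : Measurable fun x => ENNReal.ofReal (2 * C) * klDiv (ρ x) (κ x) :=
    (measurable_klDiv_kernel ρ κ).const_mul _
  have hsqrt : Measurable fun z : X × X =>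
      (ENNReal.ofReal (2 * C) * klDiv (ρ z.2) (κ z.2)) ^ (1 / 2 : ℝ) :=
    (hkl.comp measurable_snd).pow_const _
  obtain ⟨π, hπ⟩ := exists_kernel_isCoupling_eLpNorm'_edist_le hp (o := o)
    (κ := κ.comap Prod.fst measurable_fst) (η := ρ.comap Prod.snd measurable_snd)
    (fun z => (hT z.1).eLpNorm'_edist_ne_top hp o) (hf.add hsqrt)
    (fun z => ((hT z.2).wassersteinDist_le_add hp (ρ z.2)).trans (add_le_add_left (hW z) _)) hδ
  have : IsMarkovKernel π := ⟨fun z => (hπ z).1.isProbabilityMeasure⟩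
  refine ⟨_, hγ.compProd fun z => (hπ z).1, ?_, ?_⟩
  · rw [Measure.map_map (by fun_prop) (by fun_prop)]
    exact Measure.fst_compProd γ π
  rw [eLpNorm'_map_measure (by fun_prop) (by fun_prop)]
  calc eLpNorm' (fun w => edist w.2.1 w.2.2) p (γ ⊗ₘ π)
      ≤ eLpNorm' (fun z => f z +
          (ENNReal.ofReal (2 * C) * klDiv (ρ z.2) (κ z.2)) ^ (1 / 2 : ℝ) + δ) p γ :=
        eLpNorm'_compProd_le (by linarith) (by fun_prop) fun z => (hπ z).2
    _ ≤ eLpNorm' f p γ + eLpNorm' (fun z : X × X =>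
          (ENNReal.ofReal (2 * C) * klDiv (ρ z.2) (κ z.2)) ^ (1 / 2 : ℝ)) p γ + δ :=
        (eLpNorm'_le_add_const hp (hf.add hsqrt) fun z => le_rfl).trans
          (by gcongr; exact eLpNorm'_le_add hp hf hsqrt fun z => le_rfl)
    _ ≤ _ := by
        gcongr
        rw [← lintegral_const_mul _ (measurable_klDiv_kernel ρ κ), ← hγ.2,
          lintegral_map hkl measurable_snd]
        exact eLpNorm'_sqrt_le (by linarith) hp2 (hkl.comp measurable_snd)

end Step

section ChainCoupling

variable {E : Type*} [MeasurableSpace E] [PseudoMetricSpace E] [SecondCountableTopology E]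
  [OpensMeasurableSpace E] {p C : ℝ}

/-- The `L^p`-distance between the `i`-th coordinates of two random families with joint law `π`. -/
def coordDist {ι : Type*} (p : ℝ) (π : Measure ((ι → E) × (ι → E))) (i : ι) : ℝ≥0∞ :=
  eLpNorm' (fun z => edist (z.1 i) (z.2 i)) p π

lemma coordDist_map_snoc_castSucc {n : ℕ} (Γ : Measure (((Fin n → E) × E) × ((Fin n → E) × E)))
    (i : Fin n) :
    coordDist p (Γ.map (Prod.map (snocMeasurableEquiv E n) (snocMeasurableEquiv E n)))
      i.castSucc = coordDist p (Γ.map fun w => (w.1.1, w.2.1)) i := by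
  rw [coordDist, coordDist, eLpNorm'_map_measure (by fun_prop) (by fun_prop),
    eLpNorm'_map_measure (by fun_prop) (by fun_prop)]
  simp only [Prod.map_fst, Prod.map_snd, snocMeasurableEquiv_castSucc]

lemma coordDist_map_snoc_last {n : ℕ} (Γ : Measure (((Fin n → E) × E) × ((Fin n → E) × E))) :
    coordDist p (Γ.map (Prod.map (snocMeasurableEquiv E n) (snocMeasurableEquiv E n)))
      (Fin.last n) = eLpNorm' (fun w => edist w.1.2 w.2.2) p Γ := by
  rw [coordDist, eLpNorm'_map_measure (by fun_prop) (by fun_prop)]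
  simp only [Prod.map_fst, Prod.map_snd, snocMeasurableEquiv_last]

theorem exists_isCoupling_chainMeasure [StandardBorelSpace E] (hp : 1 ≤ p) (hp2 : p ≤ 2)
    (κ : (i : ℕ) → Kernel (Fin i → E) E) [∀ i, IsMarkovKernel (κ i)]
    (hT : ∀ i x, TpIneq p dist C (κ i x)) (w : ℕ → ℕ → ℝ≥0∞)
    (hW : ∀ i x x', wassersteinDist p dist (κ i x) (κ i x') ^ p ≤
      ∑ k : Fin i, w i k * edist (x k) (x' k) ^ p)
    {δ : ℝ≥0} (hδ : δ ≠ 0) (n : ℕ) (Q : Measure (Fin n → E)) [IsProbabilityMeasure Q] :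
    ∃ (π : Measure ((Fin n → E) × (Fin n → E))) (h : Fin n → ℝ≥0∞),
      IsCoupling π (chainMeasure (fun i => κ i) n) Q ∧
      ∑ i, h i ≤ klDiv Q (chainMeasure (fun i => κ i) n) ∧
      ∀ i, coordDist p π i ≤ (∑ k ∈ Finset.Iio i, w i k * coordDist p π k ^ p) ^ (1 / p) +
        (ENNReal.ofReal (2 * C) * h i) ^ (1 / 2 : ℝ) + δ := by
  have hp0 : 0 < p := by linarith
  induction n with
  | zero =>
    exact ⟨(chainMeasure (fun i => κ i) 0).prod Q, 0, ⟨by simp, by simp⟩, by simp, fun i => i.elim0⟩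
  | succ n ih =>
    have : Nonempty E := nonempty_of_isProbabilityMeasure (κ 0 default)
    obtain ⟨S, _, rfl⟩ : ∃ S : Measure ((Fin n → E) × E), IsProbabilityMeasure S ∧
        S.map (snocMeasurableEquiv E n) = Q :=
      ⟨_, Measure.isProbabilityMeasure_map (MeasurableEquiv.measurable _).aemeasurable,
        MeasurableEquiv.map_map_symm _⟩
    obtain ⟨π, h, hπ, hent, hrec⟩ := ih S.fst
    obtain ⟨Γ, hΓ, hΓπ, hlast⟩ := exists_isCoupling_compProd hp hp2 hπ (κ n) S.condKernel (hT n)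
      (f := fun z => (∑ k : Fin n, w n k * edist (z.1 k) (z.2 k) ^ p) ^ (1 / p)) (by fun_prop)
      (fun z => by rw [one_div, ENNReal.le_rpow_inv_iff hp0]; exact hW n z.1 z.2) hδ
    have hcoupling :=
      hΓ.map (snocMeasurableEquiv E n).measurable (snocMeasurableEquiv E n).measurable
    rw [← chainMeasure_succ, S.disintegrate] at hcoupling
    refine ⟨_, Fin.snoc h (∫⁻ x, klDiv (S.condKernel x) (κ n x) ∂S.fst), hcoupling, ?_, ?_⟩
    · rw [chainMeasure_succ, klDiv_map_measurableEquiv,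
        klDiv_compProd_eq_klDiv_fst_add_lintegral_condKernel, Fin.sum_univ_castSucc]
      simp only [Fin.snoc_castSucc, Fin.snoc_last]
      gcongr
    · refine Fin.lastCases ?_ fun i => ?_
      · rw [Fin.Iio_last_eq_map, Finset.sum_map]
        simp only [Fin.castSuccEmb_apply, coordDist_map_snoc_castSucc, hΓπ, coordDist_map_snoc_last,
          Fin.snoc_last]
        rwa [eLpNorm'_rpow_sum_mul_rpow π hp0 Finset.univ (fun k : Fin n => w n k)
          (f := fun k z => edist (z.1 k) (z.2 k)) fun k => by fun_prop] at hlast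
      · rw [← Fin.map_castSuccEmb_Iio, Finset.sum_map]
        simp only [Fin.castSuccEmb_apply, coordDist_map_snoc_castSucc, hΓπ, Fin.snoc_castSucc]
        exact hrec i

end ChainCoupling

/-! ### The recursive inequality for the coordinate distances -/

section Recursion

lemma rpow_sum_sqrt_le {ι : Type*} {p : ℝ} (hp : 0 < p) (hp2 : p ≤ 2) (s : Finset ι)
    (f : ι → ℝ≥0∞) :
    (∑ i ∈ s, (f i ^ (1 / 2 : ℝ)) ^ p) ^ (1 / p) ≤
      ((s.card : ℝ≥0∞) ^ (2 / p - 1) * ∑ i ∈ s, f i) ^ (1 / 2 : ℝ) := by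
  have h := ENNReal.rpow_sum_le_const_mul_sum_rpow s (fun i => (f i ^ (1 / 2 : ℝ)) ^ p)
    ((one_le_div hp).2 hp2)
  have hexp : 1 / 2 * p * (2 / p) = 1 := by field_simp
  simp only [← ENNReal.rpow_mul, hexp, ENNReal.rpow_one] at h ⊢
  calc (∑ i ∈ s, f i ^ (1 / 2 * p)) ^ (1 / p)
      = ((∑ i ∈ s, f i ^ (1 / 2 * p)) ^ (2 / p)) ^ (1 / 2 : ℝ) := by
        rw [← ENNReal.rpow_mul]
        congr 1
        ring
    _ ≤ _ := by gcongr

variable {ι : Type*} [LinearOrder ι] [LocallyFiniteOrderBot ι] {p : ℝ}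
  {T : ι → ι → ℝ≥0∞} {e α : ι → ℝ≥0∞}

lemma ne_top_of_le_rpow_sum_Iio_add [WellFoundedLT ι] (hp : 0 < p)
    (hT : ∀ k, ∀ i > k, T i k ≠ ∞) (hα : ∀ i, α i ≠ ∞)
    (he : ∀ i, e i ≤ (∑ k ∈ Finset.Iio i, T i k * e k ^ p) ^ (1 / p) + α i) (i : ι) : e i ≠ ∞ := by
  induction i using WellFoundedLT.induction with
  | ind i ih =>
    refine ne_top_of_le_ne_top (ENNReal.add_ne_top.2 ⟨?_, hα i⟩) (he i)
    refine ENNReal.rpow_ne_top_of_nonneg (by positivity) (ENNReal.sum_ne_top.2 fun k hk => ?_)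
    have hki := Finset.mem_Iio.1 hk
    exact ENNReal.mul_ne_top (hT k i hki) (ENNReal.rpow_ne_top_of_nonneg hp.le (ih k hki))

variable [Fintype ι] [LocallyFiniteOrderTop ι]

lemma sum_sum_Iio_mul_le {c : ℝ≥0∞} (hT : ∀ k, ∑ i ∈ Finset.Ioi k, T i k ≤ c) (f : ι → ℝ≥0∞) :
    ∑ i, ∑ k ∈ Finset.Iio i, T i k * f k ≤ c * ∑ k, f k := by
  rw [Finset.sum_comm' (t' := Finset.univ) (s' := Finset.Ioi) (by simp), Finset.mul_sum]
  gcongr with k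
  rw [← Finset.sum_mul]
  gcongr
  exact hT k

lemma rpow_sum_le_mul_add (hp : 1 ≤ p) {r : ℝ≥0∞}
    (hT : ∀ k, ∑ i ∈ Finset.Ioi k, T i k ≤ r ^ p)
    (he : ∀ i, e i ≤ (∑ k ∈ Finset.Iio i, T i k * e k ^ p) ^ (1 / p) + α i) :
    (∑ i, e i ^ p) ^ (1 / p) ≤ r * (∑ i, e i ^ p) ^ (1 / p) + (∑ i, α i ^ p) ^ (1 / p) := by
  have hp0 : 0 < p := by linarith
  calc (∑ i, e i ^ p) ^ (1 / p)
      ≤ (∑ i, ((∑ k ∈ Finset.Iio i, T i k * e k ^ p) ^ (1 / p) + α i) ^ p) ^ (1 / p) := by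
        gcongr with i
        exact he i
    _ ≤ (∑ i, ((∑ k ∈ Finset.Iio i, T i k * e k ^ p) ^ (1 / p)) ^ p) ^ (1 / p) +
          (∑ i, α i ^ p) ^ (1 / p) := ENNReal.Lp_add_le _ _ _ hp
    _ = (∑ i, ∑ k ∈ Finset.Iio i, T i k * e k ^ p) ^ (1 / p) + (∑ i, α i ^ p) ^ (1 / p) := by
        simp only [one_div, ENNReal.rpow_inv_rpow hp0.ne']
    _ ≤ (r ^ p * ∑ k, e k ^ p) ^ (1 / p) + (∑ i, α i ^ p) ^ (1 / p) := by
        gcongr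
        exact sum_sum_Iio_mul_le hT _
    _ = r * (∑ i, e i ^ p) ^ (1 / p) + (∑ i, α i ^ p) ^ (1 / p) := by
        rw [ENNReal.mul_rpow_of_nonneg _ _ (by positivity), one_div, ENNReal.rpow_rpow_inv hp0.ne']

lemma rpow_sum_le_inv_one_sub_mul (hp : 1 ≤ p) {r : ℝ≥0∞} (hr : r < 1)
    (hT : ∀ k, ∑ i ∈ Finset.Ioi k, T i k ≤ r ^ p)
    (he : ∀ i, e i ≤ (∑ k ∈ Finset.Iio i, T i k * e k ^ p) ^ (1 / p) + α i) :
    (∑ i, e i ^ p) ^ (1 / p) ≤ (1 - r)⁻¹ * (∑ i, α i ^ p) ^ (1 / p) := by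
  have hp0 : 0 < p := by linarith
  rcases eq_or_ne (∑ i, α i ^ p) ∞ with hα | hα
  · rw [hα, ENNReal.top_rpow_of_pos (by positivity), ENNReal.mul_top (by simp)]
    exact le_top
  have hα' (i : ι) : α i ≠ ∞ := fun h =>
    ENNReal.sum_ne_top.1 hα i (Finset.mem_univ i) (by rw [h, ENNReal.top_rpow_of_pos hp0])
  have hT' (k : ι) : ∀ i > k, T i k ≠ ∞ := fun i hi => ENNReal.sum_ne_top.1
    (ne_top_of_le_ne_top (ENNReal.rpow_ne_top_of_nonneg hp0.le hr.ne_top) (hT k)) i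
    (Finset.mem_Ioi.2 hi)
  have hfin : (∑ i, e i ^ p) ^ (1 / p) ≠ ∞ :=
    ENNReal.rpow_ne_top_of_nonneg (by positivity) (ENNReal.sum_ne_top.2 fun i _ =>
      ENNReal.rpow_ne_top_of_nonneg hp0.le (ne_top_of_le_rpow_sum_Iio_add hp0 hT' hα' he i))
  rw [← ENNReal.mul_le_iff_le_inv (tsub_pos_of_lt hr).ne' (by finiteness),
    ENNReal.sub_mul fun _ _ => hfin, one_mul]
  exact tsub_le_iff_left.2 (rpow_sum_le_mul_add hp hT he)

end Recursion

section Cost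

lemma wassersteinDist_lp_le_rpow_sum_coordDist {ι E : Type*} [Fintype ι] [MeasurableSpace E]
    [PseudoMetricSpace E] [SecondCountableTopology E] [OpensMeasurableSpace E] {p : ℝ} (hp : 0 < p)
    {P Q : Measure (ι → E)} {π : Measure ((ι → E) × (ι → E))} (hπ : IsCoupling π P Q) :
    wassersteinDist p (fun x y : ι → E => (∑ i, dist (x i) (y i) ^ p) ^ (1 / p)) P Q ≤
      (∑ i, coordDist p π i ^ p) ^ (1 / p) := by
  have hcost (z : (ι → E) × (ι → E)) :
      ENNReal.ofReal ((∑ i, dist (z.1 i) (z.2 i) ^ p) ^ (1 / p)) =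
        (∑ i, 1 * edist (z.1 i) (z.2 i) ^ p) ^ (1 / p) := by
    rw [← ENNReal.ofReal_rpow_of_nonneg (by positivity) (by positivity),
      ENNReal.ofReal_sum_of_nonneg fun i _ => by positivity]
    simp only [edist_dist, ENNReal.ofReal_rpow_of_nonneg dist_nonneg hp.le, one_mul]
  refine (wassersteinDist_le_eLpNorm' hπ).trans_eq ?_
  simp only [hcost]
  rw [eLpNorm'_rpow_sum_mul_rpow π hp Finset.univ (fun _ => 1)
    (f := fun i z => edist (z.1 i) (z.2 i)) fun i => by fun_prop]
  simp only [one_mul, coordDist]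

end Cost

lemma sum_Ioi_comp_sub_le_tsum {n : ℕ} (t : ℕ → ℝ≥0∞) (k : Fin n) :
    ∑ i ∈ Finset.Ioi k, t (i - k) ≤ ∑' j, t (j + 1) := by
  have hinj : Set.InjOn (fun i : Fin n => (i : ℕ) - k - 1) (Finset.Ioi k) := by
    intro i hi j hj hij
    simp only [Finset.coe_Ioi, Set.mem_Ioi, Fin.lt_def] at hi hj hij
    omega
  have hsucc (i : Fin n) (hi : i ∈ Finset.Ioi k) : (i : ℕ) - k = (i : ℕ) - k - 1 + 1 :=
    (Nat.sub_add_cancel (Nat.sub_pos_of_lt (Fin.lt_def.1 (Finset.mem_Ioi.1 hi)))).symm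
  calc ∑ i ∈ Finset.Ioi k, t (i - k) = ∑ i ∈ Finset.Ioi k, t ((i : ℕ) - k - 1 + 1) :=
        Finset.sum_congr rfl fun i hi => congrArg t (hsucc i hi)
    _ = ∑ j ∈ (Finset.Ioi k).image fun i : Fin n => (i : ℕ) - k - 1, t (j + 1) :=
        (Finset.sum_image (f := fun j => t (j + 1)) hinj).symm
    _ ≤ ∑' j, t (j + 1) := ENNReal.sum_le_tsum _

theorem wassersteinDist_chainMeasure_le {E : Type*} [MeasurableSpace E] [StandardBorelSpace E]
    [PseudoMetricSpace E] [SecondCountableTopology E] [OpensMeasurableSpace E] {p C : ℝ}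
    (hp : 1 ≤ p) (hp2 : p ≤ 2) (κ : (i : ℕ) → Kernel (Fin i → E) E) [∀ i, IsMarkovKernel (κ i)]
    (hT : ∀ i x, TpIneq p dist C (κ i x)) (w : ℕ → ℕ → ℝ≥0∞)
    (hW : ∀ i x x', wassersteinDist p dist (κ i x) (κ i x') ^ p ≤
      ∑ k : Fin i, w i k * edist (x k) (x' k) ^ p)
    {n : ℕ} {r : ℝ≥0∞} (hr : r < 1) (hw : ∀ k : Fin n, ∑ i ∈ Finset.Ioi k, w i k ≤ r ^ p)
    (Q : Measure (Fin n → E)) [IsProbabilityMeasure Q] :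
    wassersteinDist p (fun x y : Fin n → E => (∑ i, dist (x i) (y i) ^ p) ^ (1 / p)) Q
        (chainMeasure (fun i => κ i) n) ≤
      (1 - r)⁻¹ * (ENNReal.ofReal (2 * C) * (n : ℝ≥0∞) ^ (2 / p - 1) *
        relEntropy Q (chainMeasure (fun i => κ i) n)) ^ (1 / 2 : ℝ) := by
  have hp0 : 0 < p := by linarith
  have hrinv : (1 - r)⁻¹ ≠ ∞ := ENNReal.inv_ne_top.2 (tsub_pos_of_lt hr).ne'
  set c := ENNReal.ofReal (2 * C)
  rw [wassersteinDist_comm (fun x y => by simp only [dist_comm]), relEntropy_eq_klDiv]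
  refine ENNReal.le_of_forall_pos_le_add fun ε hε _ => ?_
  obtain ⟨δ, hδ, hδε⟩ := ENNReal.exists_nnreal_pos_mul_lt
    (a := (1 - r)⁻¹ * (n : ℝ≥0∞) ^ (1 / p)) (by finiteness) (ENNReal.coe_pos.2 hε).ne'
  obtain ⟨π, h, hπ, hent, hrec⟩ :=
    exists_isCoupling_chainMeasure hp hp2 κ hT w hW hδ.ne' n Q
  have hα : (∑ i, ((c * h i) ^ (1 / 2 : ℝ) + δ) ^ p) ^ (1 / p) ≤
      (c * (n : ℝ≥0∞) ^ (2 / p - 1) * klDiv Q (chainMeasure (fun i => κ i) n)) ^ (1 / 2 : ℝ) +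
        (n : ℝ≥0∞) ^ (1 / p) * δ := by
    refine (ENNReal.Lp_add_le _ _ _ hp).trans (add_le_add ?_ ?_)
    · refine (rpow_sum_sqrt_le hp0 hp2 _ _).trans ?_
      rw [← Finset.mul_sum, Finset.card_univ, Fintype.card_fin, mul_left_comm, mul_assoc]
      gcongr
    · rw [Finset.sum_const, Finset.card_univ, Fintype.card_fin, nsmul_eq_mul,
        ENNReal.mul_rpow_of_nonneg _ _ (by positivity), one_div, ENNReal.rpow_rpow_inv hp0.ne']
  refine (wassersteinDist_lp_le_rpow_sum_coordDist hp0 hπ).trans ?_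
  refine (rpow_sum_le_inv_one_sub_mul (T := fun i k : Fin n => w i k) hp hr hw fun i =>
    (hrec i).trans_eq (add_assoc _ _ _)).trans ?_
  grw [hα]
  rw [mul_add, ← mul_assoc _ _ (δ : ℝ≥0∞), mul_comm _ (δ : ℝ≥0∞)]
  gcongr

theorem dependent_tensorization_Tp_general
    {E : Type*} [MeasurableSpace E] [StandardBorelSpace E] [PseudoMetricSpace E]
    [SecondCountableTopology E] [OpensMeasurableSpace E]
    (p : ℝ) (hp1 : 1 ≤ p) (hp2 : p ≤ 2) (C : ℝ) (hC : 0 ≤ C) (n : ℕ)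
    (K : (i : ℕ) → (Fin i → E) → Measure E)
    (hKm : ∀ i, Measurable (K i)) (hKp : ∀ i x, IsProbabilityMeasure (K i x))
    (hT : ∀ (i : ℕ) (x : Fin i → E), TpIneq p dist C (K i x))
    (a : ℕ → ℝ) (ha : ∀ j, 0 ≤ a j)
    (hsum : Summable fun j : ℕ => a (j + 1) ^ p)
    (r : ℝ) (hr0 : 0 ≤ r) (hrp : r ^ p = ∑' j : ℕ, a (j + 1) ^ p) (hr1 : r < 1)
    (hC1 : ∀ (i : ℕ) (x x' : Fin i → E),
      wassersteinDist p dist (K i x) (K i x') ^ p ≤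
        ENNReal.ofReal (∑ k : Fin i, a (i - (k : ℕ)) ^ p * dist (x k) (x' k) ^ p))
    (Q : Measure (Fin n → E)) [IsProbabilityMeasure Q] :
    wassersteinDist p (fun x y : Fin n → E => (∑ i, dist (x i) (y i) ^ p) ^ (1 / p)) Q
        (chainMeasure K n) ≤
      ENNReal.ofReal (1 / (1 - r)) *
        (ENNReal.ofReal (2 * C * (n : ℝ) ^ (2 / p - 1)) *
          relEntropy Q (chainMeasure K n)) ^ (1 / 2 : ℝ) := by
  have hp0 : 0 < p := by linarith
  have hapow (j : ℕ) : 0 ≤ a j ^ p := Real.rpow_nonneg (ha j) p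
  have hW (i : ℕ) (x x' : Fin i → E) : wassersteinDist p dist (K i x) (K i x') ^ p ≤
      ∑ k : Fin i, ENNReal.ofReal (a (i - k) ^ p) * edist (x k) (x' k) ^ p := by
    refine (hC1 i x x').trans_eq ?_
    rw [ENNReal.ofReal_sum_of_nonneg fun k _ => mul_nonneg (hapow _) (by positivity)]
    simp only [ENNReal.ofReal_mul (hapow _), edist_dist,
      ENNReal.ofReal_rpow_of_nonneg dist_nonneg hp0.le]
  have hw (k : Fin n) :
      ∑ i ∈ Finset.Ioi k, ENNReal.ofReal (a (i - k) ^ p) ≤ ENNReal.ofReal r ^ p := by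
    rw [ENNReal.ofReal_rpow_of_nonneg hr0 hp0.le, hrp,
      ENNReal.ofReal_tsum_of_nonneg (fun j => hapow _) hsum]
    exact sum_Ioi_comp_sub_le_tsum (fun j => ENNReal.ofReal (a j ^ p)) k
  have hq : 0 ≤ 2 / p - 1 := sub_nonneg.2 ((one_le_div hp0).2 hp2)
  let κ (i : ℕ) : Kernel (Fin i → E) E := ⟨K i, hKm i⟩
  have (i : ℕ) : IsMarkovKernel (κ i) := ⟨hKp i⟩
  rw [one_div (1 - r), ENNReal.ofReal_inv_of_pos (sub_pos.2 hr1), ENNReal.ofReal_sub _ hr0,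
    ENNReal.ofReal_one, ENNReal.ofReal_mul (by positivity),
    ← ENNReal.ofReal_rpow_of_nonneg (by positivity) hq, ENNReal.ofReal_natCast]
  exact wassersteinDist_chainMeasure_le hp1 hp2 κ hT (fun i k => ENNReal.ofReal (a (i - k) ^ p))
    hW (by simpa using hr1) hw Q

/-- **Theorem 2.5: dependent tensorization of `T_p(C)`, `1 ≤ p ≤ 2`.** -/
theorem dependent_tensorization_Tp
    {E : Type*} [MeasurableSpace E] [MetricSpace E] [CompleteSpace E]
    [SecondCountableTopology E] [BorelSpace E]
    (p : ℝ) (hp1 : 1 ≤ p) (hp2 : p ≤ 2) (C : ℝ) (hC : 0 < C) (n : ℕ)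
    (K : (i : ℕ) → (Fin i → E) → Measure E)
    (hKm : ∀ i, Measurable (K i)) (hKp : ∀ i x, IsProbabilityMeasure (K i x))
    (hT : ∀ (i : ℕ) (x : Fin i → E), TpIneq p dist C (K i x))
    (a : ℕ → ℝ) (ha : ∀ j, 0 ≤ a j)
    (hsum : Summable fun j : ℕ => a (j + 1) ^ p)
    (r : ℝ) (hr0 : 0 ≤ r) (hrp : r ^ p = ∑' j : ℕ, a (j + 1) ^ p) (hr1 : r < 1)
    (hC1 : ∀ (i : ℕ) (x x' : Fin i → E),
      wassersteinDist p dist (K i x) (K i x') ^ p ≤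
        ENNReal.ofReal (∑ k : Fin i, a (i - (k : ℕ)) ^ p * dist (x k) (x' k) ^ p))
    (Q : Measure (Fin n → E)) [IsProbabilityMeasure Q] :
    wassersteinDist p (fun x y : Fin n → E => (∑ i, dist (x i) (y i) ^ p) ^ (1 / p)) Q
        (chainMeasure K n) ≤
      ENNReal.ofReal (1 / (1 - r)) *
        (ENNReal.ofReal (2 * C * (n : ℝ) ^ (2 / p - 1)) *
          relEntropy Q (chainMeasure K n)) ^ (1 / 2 : ℝ) := by
  exact dependent_tensorization_Tp_general p hp1 hp2 C hC.le n K hKm hKp hT a ha hsum r hr0 hrp hr1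
    hC1 Q

end
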